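/- For all real numbers r and α with r ≥ 3^{3/2} and α ≥ 1: r/(r + α) ≥ (1/4)·(log(1 + r/α))/(log r). -/

import Mathlib

/-! With `x = r / α ∈ (0, r]` the claim reads `(1 + x) log (1 + x) ≤ 4 x log r`. It follows from
`log (1 + x) ≤ x`, from `log (1 + x) ≤ log (r ^ 2) = 2 log r` (as `1 + r ≤ r ^ 2`), and from
`log r ≥ 1 - 1 / r ≥ 1 / 2`: the left side is at most `x + 2 x log r ≤ 4 x log r`. -/

/-- For all reals `r ≥ 3^(3/2)` and `α ≥ 1`:
`r / (r + α) ≥ (1/4) · log(1 + r/α) / log r`. -/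
theorem log_ratio_bound
    (r α : ℝ) (hr : (3 : ℝ) ^ ((3 : ℝ) / 2) ≤ r) (hα : 1 ≤ α) :
    1 / 4 * (Real.log (1 + r / α) / Real.log r) ≤ r / (r + α) := by
  have hr3 : 3 ≤ r :=
    (Real.self_le_rpow_of_one_le (by norm_num) (by norm_num)).trans hr
  have hlogr : 1 / 2 ≤ Real.log r := by
    have h := Real.one_sub_inv_le_log_of_pos (show 0 < r by linarith)
    have h' : r⁻¹ ≤ 3⁻¹ := inv_anti₀ (by norm_num) hr3
    norm_num at h' ⊢
    linarith
  have hα0 : 0 < α := by linarith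
  have hx0 : 0 < r / α := by positivity
  have hxr : r / α ≤ r := div_le_self (by linarith) hα
  have hfrac : r / (r + α) = (r / α) / (1 + r / α) := by
    field_simp
    ring
  rw [hfrac]
  generalize r / α = x at hx0 hxr
  have hLx : Real.log (1 + x) ≤ x := by
    have := Real.log_le_sub_one_of_pos (show 0 < 1 + x by linarith)
    linarith
  have hLr : Real.log (1 + x) ≤ 2 * Real.log r := by
    have h : Real.log (1 + x) ≤ Real.log (r ^ 2) :=
      Real.log_le_log (by linarith) (by nlinarith)
    rw [Real.log_pow] at h
    exact_mod_cast h
  rw [← mul_div_assoc, div_le_div_iff₀ (by linarith) (by linarith)]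
  nlinarith [mul_le_mul_of_nonneg_left hLr hx0.le, mul_le_mul_of_nonneg_left hlogr hx0.le]
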